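/- In the lattice I_{1,6} with h = 3e_0 - e_1 - ... - e_6, the set of vectors β with β·β = -1 and β·h = 1 has exactly 27 elements. -/

import Mathlib

/-- The intersection form on the lattice I_{1,6} = ℤ^7: diag(1,-1,-1,-1,-1,-1,-1). -/
def Ip (x y : Fin 7 → ℤ) : ℤ := x 0 * y 0 - ∑ i : Fin 6, x i.succ * y i.succ

/-- The hyperplane class h = 3e₀ - e₁ - ⋯ - e₆. -/
def hcl : Fin 7 → ℤ := ![3, -1, -1, -1, -1, -1, -1]

/-- Candidate vectors: leading coefficient `a ∈ {0,1,2}`, other coefficients in `{0,1}`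
if `a = 0` and in `{0,-1}` otherwise. -/
def candVec (p : Fin 3 × (Fin 6 → Bool)) : Fin 7 → ℤ :=
  Fin.cons (p.1.val : ℤ) (fun i => if p.2 i then (if p.1 = 0 then 1 else -1) else 0)

theorem candVec_injective : Function.Injective candVec := by
  rintro ⟨a, s⟩ ⟨b, t⟩ h
  have h0 := congrFun h 0
  simp only [candVec, Fin.cons_zero] at h0
  have hab : a = b := by
    apply Fin.ext
    exact_mod_cast h0
  subst hab
  have hst : s = t := by
    funext i
    have hi := congrFun h i.succ
    simp only [candVec, Fin.cons_succ] at hi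
    cases hs : s i <;> cases ht : t i <;> by_cases ha : a = 0 <;> simp_all
  rw [hst]

/-- The candidates satisfying both equations. -/
def candSet : Finset (Fin 3 × (Fin 6 → Bool)) :=
  Finset.univ.filter fun p => Ip (candVec p) (candVec p) = -1 ∧ Ip (candVec p) hcl = 1

theorem candSet_card : candSet.card = 27 := by
  decide +kernel

theorem int_sq_add_nonneg (x : ℤ) : 0 ≤ x * x + x := by
  rcases le_or_gt 0 x with h | h <;> nlinarith

theorem exists_cand (β : Fin 7 → ℤ) (h1 : Ip β β = -1) (h2 : Ip β hcl = 1) :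
    ∃ p, candVec p = β := by
  have e1 : ∑ i : Fin 6, β i.succ * β i.succ = β 0 * β 0 + 1 := by
    unfold Ip at h1; linarith
  have e2 : ∑ i : Fin 6, β i.succ = 1 - 3 * β 0 := by
    have : ∑ i : Fin 6, β i.succ * hcl i.succ = - ∑ i : Fin 6, β i.succ := by
      simp [Fin.sum_univ_succ, hcl]; ring
    unfold Ip at h2
    rw [this] at h2
    have h3 : hcl 0 = 3 := rfl
    rw [h3] at h2
    linarith
  have cs : (∑ i : Fin 6, β i.succ) ^ 2 ≤ 6 * ∑ i : Fin 6, β i.succ * β i.succ := by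
    have := sq_sum_le_card_mul_sum_sq (s := (Finset.univ : Finset (Fin 6)))
      (f := fun i => β i.succ)
    simpa [sq] using this
  rw [e1, e2] at cs
  have ha0 : 0 ≤ β 0 := by nlinarith
  have ha2 : β 0 ≤ 2 := by nlinarith
  -- coordinates from a vanishing sum of nonnegative terms
  have key : (β 0 = 0 ∧ ∀ i : Fin 6, β i.succ = 0 ∨ β i.succ = 1) ∨
      ((β 0 = 1 ∨ β 0 = 2) ∧ ∀ i : Fin 6, β i.succ = 0 ∨ β i.succ = -1) := by
    have h012 : β 0 = 0 ∨ (β 0 = 1 ∨ β 0 = 2) := by omega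
    rcases h012 with h | h
    · left
      refine ⟨h, fun i => ?_⟩
      have hs : ∑ i : Fin 6, ((-β i.succ) * (-β i.succ) + (-β i.succ)) = 0 := by
        simp only [neg_mul_neg, Finset.sum_add_distrib, Finset.sum_neg_distrib, e1, e2, h]
        norm_num
      have := (Finset.sum_eq_zero_iff_of_nonneg
        (fun i _ => int_sq_add_nonneg (-β (Fin.succ i)))).1 hs i (Finset.mem_univ i)
      have h4 : β i.succ * (β i.succ - 1) = 0 := by linarith
      rcases mul_eq_zero.1 h4 with h5 | h5
      · exact Or.inl h5
      · right; linarith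
    · right
      refine ⟨h, fun i => ?_⟩
      have hs : ∑ i : Fin 6, (β i.succ * β i.succ + β i.succ) = 0 := by
        simp only [Finset.sum_add_distrib, e1, e2]
        rcases h with h | h <;> rw [h] <;> norm_num
      have := (Finset.sum_eq_zero_iff_of_nonneg
        (fun i _ => int_sq_add_nonneg (β (Fin.succ i)))).1 hs i (Finset.mem_univ i)
      have h4 : β i.succ * (β i.succ + 1) = 0 := by linarith
      rcases mul_eq_zero.1 h4 with h5 | h5
      · exact Or.inl h5
      · right; linarith
  have build : ∀ a : Fin 3, β 0 = (a.val : ℤ) →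
      (∀ i : Fin 6, β i.succ = 0 ∨ β i.succ = if a = 0 then 1 else -1) →
      ∃ p, candVec p = β := by
    intro a ha hb
    refine ⟨(a, fun i => decide (β i.succ ≠ 0)), ?_⟩
    funext j
    refine Fin.cases ?_ (fun i => ?_) j
    · simp only [candVec, Fin.cons_zero, ha]
    · simp only [candVec, Fin.cons_succ]
      by_cases hz : β i.succ = 0
      · simp [hz]
      · have := (hb i).resolve_left hz
        simp only [ne_eq, hz, not_false_eq_true, decide_true, if_true]
        exact this.symm
  rcases key with ⟨h, hb⟩ | ⟨h | h, hb⟩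
  · exact build 0 (by simpa using h) (by simpa using hb)
  · exact build 1 (by simpa using h) (by simpa using hb)
  · exact build 2 (by simpa using h) (by simpa using hb)

/-- The set of line classes {β ∈ I_{1,6} : β·β = -1, β·h = 1} (the classes of the 27 lines
on a smooth cubic surface) has exactly 27 elements. -/
theorem lines_card :
    {β : Fin 7 → ℤ | Ip β β = -1 ∧ Ip β hcl = 1}.ncard = 27 := by
  have h : {β : Fin 7 → ℤ | Ip β β = -1 ∧ Ip β hcl = 1} = candVec '' (candSet : Set _) := by
    ext β
    constructor
    · rintro ⟨h1, h2⟩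
      obtain ⟨p, rfl⟩ := exists_cand β h1 h2
      exact ⟨p, by simp [candSet, h1, h2], rfl⟩
    · rintro ⟨p, hp, rfl⟩
      simpa [candSet] using hp
  rw [h, Set.ncard_image_of_injective _ candVec_injective, Set.ncard_coe_finset, candSet_card]
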